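/- arXiv:1310.3326 — 2 statements merged into one kernel-verified Lean document; each statement's English description precedes it below -/
import Mathlib

section
/- For every q ∈ S³_𝒜, the element hat(q) is invertible with hat(q)⁻¹ = hat(q̄), and for every ξ ∈ ℝ⁴ ⊂ ℍ^𝒜 the element q ξ hat(q)⁻¹ again belongs to ℝ⁴ and satisfies H(q ξ hat(q)⁻¹, q ξ hat(q)⁻¹) = H(ξ, ξ); thus every q ∈ Spin(4) induces a linear isometry Φ(q) : ξ ↦ q ξ hat(q)⁻¹ of Euclidean ℝ⁴. -/
/-!
The algebra of Lorentz numbers `𝒜 = {x + σy}` with `σ² = 1` is identified with the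
product ring `ℝ × ℝ` via `x + σy ↦ (x + y, x − y)`, under which `σ ↦ (1, −1)`.
`ℍ^𝒜` is the quaternion algebra over this commutative ring.
-/

noncomputable section

/-- The algebra of Lorentz numbers `𝒜`, identified with the product ring `ℝ × ℝ`. -/
abbrev LorentzA : Type := ℝ × ℝ

/-- `ℍ^𝒜`, the quaternions with coefficients in the Lorentz numbers `𝒜`. -/
abbrev HA : Type := Quaternion LorentzA

/-- The Lorentz number `σ`, corresponding to `(1, -1)` in `ℝ × ℝ`. -/
def σA : LorentzA := (1, -1)

/-- `σ` viewed as an element of `ℍ^𝒜`. -/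
def σQ : HA := ((σA : LorentzA) : HA)

/-- The embedding of `ℝ` in `𝒜` (the diagonal of `ℝ × ℝ`). -/
def toA (x : ℝ) : LorentzA := (x, x)

/-- The `𝒜`-valued pairing `H` on `ℍ^𝒜`: `H(ξ, ξ') = a₀a₀' + a₁a₁' + a₂a₂' + a₃a₃'`. -/
def Hform (ξ ξ' : HA) : LorentzA :=
  ξ.re * ξ'.re + ξ.imI * ξ'.imI + ξ.imJ * ξ'.imJ + ξ.imK * ξ'.imK

/-- The conjugation `x + σy ↦ x − σy` of `𝒜`, i.e. the swap of the factors of `ℝ × ℝ`. -/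
def swapA (a : LorentzA) : LorentzA := (a.2, a.1)

/-- The hat operation on `ℍ^𝒜`, applying the conjugation of `𝒜` to each coefficient. -/
def hatQ (ξ : HA) : HA := ⟨swapA ξ.re, swapA ξ.imI, swapA ξ.imJ, swapA ξ.imK⟩

/-- The imaginary unit `I` of `ℍ^𝒜`. -/
def Iq : HA := ⟨0, 1, 0, 0⟩
/-- The imaginary unit `J` of `ℍ^𝒜`. -/
def Jq : HA := ⟨0, 0, 1, 0⟩
/-- The imaginary unit `K` of `ℍ^𝒜`. -/
def Kq : HA := ⟨0, 0, 0, 1⟩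

/-- The embedding of Euclidean `ℝ⁴` into `ℍ^𝒜`: `(x₀,x₁,x₂,x₃) ↦ σx₀·1 + x₁I + x₂J + x₃K`. -/
def embR4 (x₀ x₁ x₂ x₃ : ℝ) : HA := ⟨(x₀, -x₀), toA x₁, toA x₂, toA x₃⟩

/-- `ℝ⁴` as a subset of `ℍ^𝒜`: `{ξ : hat(conj ξ) = -ξ}`. -/
def R4set : Set HA := {ξ | hatQ (star ξ) = -ξ}

/-- The embedding `ι : ℍ → ℍ^𝒜` induced by the diagonal inclusion `ℝ → ℝ × ℝ ≅ 𝒜`. -/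
def iotaH (q : Quaternion ℝ) : HA := ⟨toA q.re, toA q.imI, toA q.imJ, toA q.imK⟩

/-- Componentwise cosine on `𝒜 ≅ ℝ × ℝ`. -/
def cosA (a : LorentzA) : LorentzA := (Real.cos a.1, Real.cos a.2)
/-- Componentwise sine on `𝒜 ≅ ℝ × ℝ`. -/
def sinA (a : LorentzA) : LorentzA := (Real.sin a.1, Real.sin a.2)

/-- The Lorentz number `θ₁ + σθ₂`, i.e. `(θ₁ + θ₂, θ₁ − θ₂)` in `ℝ × ℝ`. -/
def mkA (θ₁ θ₂ : ℝ) : LorentzA := (θ₁ + θ₂, θ₁ - θ₂)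

/-- The cross product of two imaginary elements of `ℍ^𝒜`: `ξ × ξ' = (ξξ' − ξ'ξ)/2`. -/
def crossP (ξ ξ' : HA) : HA := (1/2 : ℝ) • (ξ * ξ' - ξ' * ξ)

/-- `(1+σ)/2` in `ℍ^𝒜`. -/
def halfPlus : HA := (1/2 : ℝ) • ((1 : HA) + σQ)
/-- `(1−σ)/2` in `ℍ^𝒜`. -/
def halfMinus : HA := (1/2 : ℝ) • ((1 : HA) - σQ)

/-!
The map `x ↦ hat(x̄)` is an involutive anti-automorphism sending `q` to `hat(q̄)` and `hat(q̄)` to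
`q`. Hence it sends `q ξ hat(q̄)` to `q hat(ξ̄) hat(q̄)`, and its `-1`-eigenspace `ℝ⁴` is preserved.
The form `H(ξ, ξ)` is the multiplicative quaternion norm, and `hat(q̄)` has norm `1` together
with `q`.
-/

theorem map_star_twisted_conj_eq_neg {A F : Type*} [Semigroup A] [HasDistribNeg A] [StarMul A]
    [FunLike F A A] [MulHomClass F A A] {f : F} (hf : Function.Involutive f)
    (hf_star : ∀ a, f (star a) = star (f a)) (a : A) {x : A} (hx : f (star x) = -x) :
    f (star (a * x * f (star a))) = -(a * x * f (star a)) :=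
  calc f (star (a * x * f (star a)))
      = f (f a * (star x * star a)) := by rw [star_mul, star_mul, ← hf_star, star_star]
    _ = a * (f (star x) * f (star a)) := by rw [map_mul, map_mul, hf a]
    _ = -(a * x * f (star a)) := by rw [hx, neg_mul, mul_neg, mul_assoc]

section QuaternionMap

open scoped Quaternion

variable {R S : Type*} [CommRing R] [CommRing S]

/-- The function on quaternions applying `f` to each coefficient: the map underlying
`quaternionMap`, separated from it so that its values have type `ℍ[S]` rather than
`QuaternionAlgebra S (-1) 0 (-1)`. -/
def quaternionMapFun (f : R → S) (a : ℍ[R]) : ℍ[S] :=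
  ⟨f a.re, f a.imI, f a.imJ, f a.imK⟩

@[simp]
theorem re_quaternionMapFun (f : R → S) (a : ℍ[R]) : (quaternionMapFun f a).re = f a.re :=
  rfl

@[simp]
theorem imI_quaternionMapFun (f : R → S) (a : ℍ[R]) : (quaternionMapFun f a).imI = f a.imI :=
  rfl

@[simp]
theorem imJ_quaternionMapFun (f : R → S) (a : ℍ[R]) : (quaternionMapFun f a).imJ = f a.imJ :=
  rfl

@[simp]
theorem imK_quaternionMapFun (f : R → S) (a : ℍ[R]) : (quaternionMapFun f a).imK = f a.imK :=
  rfl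

/-- The ring homomorphism of quaternions applying `φ` to each coefficient. It generalizes the hat
operation, which is the case of the swap of `ℝ × ℝ`. -/
def quaternionMap (φ : R →+* S) : ℍ[R] →+* ℍ[S] where
  toFun := quaternionMapFun φ
  map_one' := by ext <;> simp
  map_zero' := by ext <;> simp
  map_add' a b := by ext <;> simp
  map_mul' a b := by ext <;> simp

@[simp]
theorem quaternionMap_apply (φ : R →+* S) (a : ℍ[R]) :
    quaternionMap φ a = quaternionMapFun φ a :=
  rfl

theorem quaternionMap_star (φ : R →+* S) (a : ℍ[R]) :
    quaternionMap φ (star a) = star (quaternionMap φ a) := by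
  ext <;> simp

theorem normSq_quaternionMap (φ : R →+* S) (a : ℍ[R]) :
    Quaternion.normSq (quaternionMap φ a) = φ (Quaternion.normSq a) := by
  simp [Quaternion.normSq_def']

theorem quaternionMap_involutive {φ : R →+* R} (hφ : Function.Involutive φ) :
    Function.Involutive (quaternionMap φ) := fun a => by
  ext <;> simp [hφ _]

theorem normSq_twisted_conj (φ : R →+* R) (q ξ : ℍ[R]) :
    Quaternion.normSq (q * ξ * quaternionMap φ (star q)) =
      Quaternion.normSq q * Quaternion.normSq ξ * φ (Quaternion.normSq q) := by
  rw [map_mul, map_mul, normSq_quaternionMap, Quaternion.normSq_star]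

theorem spin_action_preserves_R4_general {φ : R →+* R} (hφ : Function.Involutive φ) (q : ℍ[R])
    (hq : Quaternion.normSq q = 1) :
    (quaternionMap φ q * quaternionMap φ (star q) = 1 ∧
        quaternionMap φ (star q) * quaternionMap φ q = 1) ∧
      ∀ ξ, quaternionMap φ (star ξ) = -ξ →
        quaternionMap φ (star (q * ξ * quaternionMap φ (star q))) =
            -(q * ξ * quaternionMap φ (star q)) ∧
          Quaternion.normSq (q * ξ * quaternionMap φ (star q)) = Quaternion.normSq ξ := by
  refine ⟨⟨?_, ?_⟩, fun ξ hξ => ⟨?_, ?_⟩⟩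
  · rw [← map_mul, Quaternion.self_mul_star, hq, Quaternion.coe_one, map_one]
  · rw [← map_mul, Quaternion.star_mul_self, hq, Quaternion.coe_one, map_one]
  · exact map_star_twisted_conj_eq_neg (quaternionMap_involutive hφ) (quaternionMap_star φ) q hξ
  · rw [normSq_twisted_conj, hq, map_one, one_mul, mul_one]

end QuaternionMap

theorem Hform_self (ξ : HA) : Hform ξ ξ = Quaternion.normSq ξ := by
  simp only [Hform, Quaternion.normSq_def', sq]

/-- The conjugation `swapA` of `𝒜` as a ring homomorphism. -/
def swapAHom : LorentzA →+* LorentzA :=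
  (RingEquiv.prodComm : LorentzA ≃+* LorentzA).toRingHom

theorem swapAHom_involutive : Function.Involutive swapAHom :=
  Prod.swap_swap

theorem hatQ_eq_quaternionMap (ξ : HA) : hatQ ξ = quaternionMap swapAHom ξ :=
  rfl

/-- For `q ∈ S³_𝒜`, `hat(q)` is invertible with inverse `hat(q̄)`, and
`ξ ↦ q ξ hat(q)⁻¹` preserves `ℝ⁴ ⊂ ℍ^𝒜` and the Euclidean form `H` on it; thus every
`q ∈ Spin(4)` induces a linear isometry of `ℝ⁴`. -/
theorem spin_action_preserves_R4 (q : HA) (hq : Hform q q = 1) :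
    (hatQ q * hatQ (star q) = 1 ∧ hatQ (star q) * hatQ q = 1) ∧
      ∀ ξ ∈ R4set, q * ξ * hatQ (star q) ∈ R4set ∧
        Hform (q * ξ * hatQ (star q)) (q * ξ * hatQ (star q)) = Hform ξ ξ := by
  simp only [R4set, Set.mem_ofPred_eq, Hform_self, hatQ_eq_quaternionMap] at hq ⊢
  exact spin_action_preserves_R4_general swapAHom_involutive q hq
end
end

section
/- Let g₁, g₂ ∈ ℍ and set g := ((1+σ)/2) ι(g₁) + ((1−σ)/2) ι(g₂) ∈ ℍ^𝒜. Then, with q := ḡ₁g₂ ∈ ℍ, one has σ ḡ ĝ = ((1+σ)/2) ι(q) − ((1−σ)/2) ι(q̄) = (σ/2)(ι(q) + ι(q̄)) + (1/2)(ι(q) − ι(q̄)); in particular σ ḡ ĝ lies in ℝ⁴ ⊂ ℍ^𝒜 and, under the identification of ℝ⁴ ⊂ ℍ^𝒜 with ℍ given by σq₀ + q₁I + q₂J + q₃K ↦ q₀ + q₁I + q₂J + q₃K, the element σ ḡ ĝ corresponds to the quaternion product ḡ₁g₂. -/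
/-!
The algebra of Lorentz numbers `𝒜 = {x + σy}` with `σ² = 1` is identified with the
product ring `ℝ × ℝ` via `x + σy ↦ (x + y, x − y)`, under which `σ ↦ (1, −1)`.
`ℍ^𝒜` is the quaternion algebra over this commutative ring.
-/

noncomputable section

/-!
Since `𝒜 ≅ ℝ × ℝ`, taking the two components of every coefficient identifies `ℍ^𝒜` with the
⋆-algebra `ℍ × ℍ`. There `σ = (1, −1)`, `ι` is the diagonal, the hat operation swaps the factors
and `g = (g₁, g₂)`, so that `σ ḡ ĝ = (1, −1) (ḡ₁, ḡ₂) (g₂, g₁) = (q, −q̄)` with `q = ḡ₁g₂`.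
The subspace `ℝ⁴` is `{(q, −q̄) : q ∈ ℍ}`.
-/

open scoped Quaternion

theorem smul_one_add_mul_sub_smul_one_sub_mul {k A : Type*} [CommSemiring k] [Ring A]
    [Algebra k A] (r : k) (s x y : A) :
    r • (1 + s) * x - r • (1 - s) * y = r • (s * (x + y)) + r • (x - y) := by
  simp only [smul_mul_assoc, add_mul, sub_mul, one_mul, mul_add, smul_add, smul_sub]
  abel

section ProductRing

variable (k R S : Type*) [CommRing R] [CommRing S] [SMul k R] [SMul k S]

/-- The splitting of the quaternions over a product ring `R × S` into the quaternions over each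
factor, obtained by projecting the four coefficients. -/
def quaternionProdEquiv : ℍ[R × S] ≃⋆ₐ[k] ℍ[R] × ℍ[S] where
  toFun ξ := (⟨ξ.re.1, ξ.imI.1, ξ.imJ.1, ξ.imK.1⟩, ⟨ξ.re.2, ξ.imI.2, ξ.imJ.2, ξ.imK.2⟩)
  invFun p := ⟨(p.1.re, p.2.re), (p.1.imI, p.2.imI), (p.1.imJ, p.2.imJ), (p.1.imK, p.2.imK)⟩
  left_inv _ := rfl
  right_inv _ := rfl
  map_mul' _ _ := rfl
  map_add' _ _ := rfl
  map_star' _ := rfl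
  map_smul' _ _ := rfl

@[simp]
theorem quaternionProdEquiv_coe (r : R × S) :
    quaternionProdEquiv k R S (r : ℍ[R × S]) = ((r.1 : ℍ[R]), (r.2 : ℍ[S])) := rfl

end ProductRing

/-- The identification `ℍ^𝒜 ≅ ℍ × ℍ` induced by `𝒜 ≅ ℝ × ℝ`. -/
def splitHA : HA ≃⋆ₐ[ℝ] ℍ[ℝ] × ℍ[ℝ] := quaternionProdEquiv ℝ ℝ ℝ

theorem splitHA_σQ : splitHA σQ = (1, -1) := by
  simp [splitHA, σQ, σA]

theorem splitHA_iotaH (q : ℍ[ℝ]) : splitHA (iotaH q) = (q, q) := rfl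

theorem splitHA_hatQ (ξ : HA) : splitHA (hatQ ξ) = (splitHA ξ).swap := rfl

theorem splitHA_halfPlus : splitHA halfPlus = (1, 0) := by
  rw [halfPlus, map_smul, map_add, map_one, splitHA_σQ]
  refine Prod.ext ?_ ?_ <;>
    simp only [Prod.smul_fst, Prod.smul_snd, Prod.fst_add, Prod.snd_add, Prod.fst_one,
      Prod.snd_one] <;>
    module

theorem splitHA_halfMinus : splitHA halfMinus = (0, 1) := by
  rw [halfMinus, map_smul, map_sub, map_one, splitHA_σQ]
  refine Prod.ext ?_ ?_ <;>
    simp only [Prod.smul_fst, Prod.smul_snd, Prod.fst_sub, Prod.snd_sub, Prod.fst_one,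
      Prod.snd_one] <;>
    module

theorem splitHA_halfPlus_mul_add_halfMinus_mul (a b : ℍ[ℝ]) :
    splitHA (halfPlus * iotaH a + halfMinus * iotaH b) = (a, b) := by
  simp [splitHA_halfPlus, splitHA_halfMinus, splitHA_iotaH]

theorem halfPlus_mul_sub_halfMinus_mul (ξ η : HA) :
    halfPlus * ξ - halfMinus * η = (1 / 2 : ℝ) • (σQ * (ξ + η)) + (1 / 2 : ℝ) • (ξ - η) :=
  smul_one_add_mul_sub_smul_one_sub_mul _ _ _ _

theorem splitHA_embR4 (q : ℍ[ℝ]) :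
    splitHA (embR4 q.re q.imI q.imJ q.imK) = (q, -star q) := by
  refine Prod.ext rfl ?_
  change (⟨-q.re, q.imI, q.imJ, q.imK⟩ : ℍ[ℝ]) = -star q
  ext <;> simp

theorem mem_R4set_iff (ξ : HA) :
    ξ ∈ R4set ↔ (splitHA ξ).2 = -star (splitHA ξ).1 := by
  change hatQ (star ξ) = -ξ ↔ _
  rw [← (EquivLike.injective splitHA).eq_iff, splitHA_hatQ, map_star, map_neg, Prod.ext_iff]
  constructor
  · rintro ⟨-, h⟩
    exact neg_eq_iff_eq_neg.mp h.symm
  · intro h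
    simp [h]

theorem splitHA_σQ_mul_star_mul_hatQ (ξ : HA) :
    splitHA (σQ * star ξ * hatQ ξ) =
      (star (splitHA ξ).1 * (splitHA ξ).2, -(star (splitHA ξ).2 * (splitHA ξ).1)) := by
  simp [map_star, splitHA_σQ, splitHA_hatQ, Prod.ext_iff]

/-- For `g = ((1+σ)/2)ι(g₁) + ((1−σ)/2)ι(g₂)` and `q = ḡ₁g₂ ∈ ℍ`,
one has `σ ḡ ĝ = ((1+σ)/2)ι(q) − ((1−σ)/2)ι(q̄) = (σ/2)(ι(q)+ι(q̄)) + (1/2)(ι(q)−ι(q̄))`;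
in particular `σ ḡ ĝ ∈ ℝ⁴ ⊂ ℍ^𝒜` and it corresponds to the quaternion `ḡ₁g₂` under
the identification `σq₀ + q₁I + q₂J + q₃K ↦ q₀ + q₁I + q₂J + q₃K`. -/
theorem sigma_conj_hat_product (g₁ g₂ : Quaternion ℝ) :
    let g : HA := halfPlus * iotaH g₁ + halfMinus * iotaH g₂
    let q : Quaternion ℝ := star g₁ * g₂
    σQ * star g * hatQ g = halfPlus * iotaH q - halfMinus * iotaH (star q) ∧
    σQ * star g * hatQ g =
      (1/2 : ℝ) • (σQ * (iotaH q + iotaH (star q))) + (1/2 : ℝ) • (iotaH q - iotaH (star q)) ∧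
    σQ * star g * hatQ g ∈ R4set ∧
    σQ * star g * hatQ g = embR4 q.re q.imI q.imJ q.imK := by
  intro g q
  have split_eq : splitHA (σQ * star g * hatQ g) = (q, -star q) := by
    simp [splitHA_σQ_mul_star_mul_hatQ, splitHA_halfPlus_mul_add_halfMinus_mul, g, q]
  have eq_halves : σQ * star g * hatQ g = halfPlus * iotaH q - halfMinus * iotaH (star q) := by
    apply EquivLike.injective splitHA
    simp [split_eq, splitHA_halfPlus, splitHA_halfMinus, splitHA_iotaH]
  refine ⟨eq_halves, eq_halves.trans (halfPlus_mul_sub_halfMinus_mul _ _), ?_, ?_⟩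
  · rw [mem_R4set_iff, split_eq]
  · exact EquivLike.injective splitHA (split_eq.trans (splitHA_embR4 q).symm)
end
end
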